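/- Let p, q ≥ 1 be integers with p + q ≥ 4 and set n = p + q. The action of O(p,q) on the flag manifold F_{1,n-2} = {(V₁, V₂) : V₁ ⊆ V₂ ⊆ ℝⁿ, dim V₁ = 1, dim V₂ = n−2} has exactly 21 orbits when p ≥ 3 and q ≥ 3. (By the correspondence established in the paper, this is the number of left-invariant pseudo-Riemannian metrics of signature (p,q) on H₃ × ℝ^{n−3} up to scaling and automorphisms.) -/

import Mathlib

open Module

noncomputable section

/-- The radical of a subspace `W` with respect to a bilinear form `B`:
the set of vectors of `W` orthogonal to every vector of `W`. -/
def rad {V : Type*} [AddCommGroup V] [Module ℝ V] (B : LinearMap.BilinForm ℝ V)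
    (W : Submodule ℝ V) : Submodule ℝ V :=
  W ⊓ LinearMap.BilinForm.orthogonal B W

/-- The maximal dimension of a subspace of `W` on which `B` is positive definite. -/
def posIdx {V : Type*} [AddCommGroup V] [Module ℝ V] (B : LinearMap.BilinForm ℝ V)
    (W : Submodule ℝ V) : ℕ :=
  sSup {k | ∃ P : Submodule ℝ V, P ≤ W ∧ finrank ℝ P = k ∧ ∀ x ∈ P, x ≠ 0 → 0 < B x x}

/-- The maximal dimension of a subspace of `W` on which `B` is negative definite. -/
def negIdx {V : Type*} [AddCommGroup V] [Module ℝ V] (B : LinearMap.BilinForm ℝ V)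
    (W : Submodule ℝ V) : ℕ :=
  sSup {k | ∃ P : Submodule ℝ V, P ≤ W ∧ finrank ℝ P = k ∧ ∀ x ∈ P, x ≠ 0 → B x x < 0}

/-- The signature `(s, t, u)` of a subspace `W` with respect to a bilinear form `B`. -/
def signat {V : Type*} [AddCommGroup V] [Module ℝ V] (B : LinearMap.BilinForm ℝ V)
    (W : Submodule ℝ V) : ℕ × ℕ × ℕ :=
  (posIdx B W, negIdx B W, finrank ℝ (rad B W))

/-- The standard inner product of signature `(p, q)` on `ℝ^(p+q)`,
given by the diagonal matrix `I_{p,q}`. -/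
def stdForm (p q : ℕ) : LinearMap.BilinForm ℝ (Fin (p + q) → ℝ) :=
  Matrix.toLinearMap₂' ℝ (Matrix.diagonal fun i => if (i : ℕ) < p then (1 : ℝ) else -1)

/-- The flag manifold `F_{1, p+q-2}`: pairs `(V₁, V₂)` of subspaces of `ℝ^(p+q)` with
`V₁ ⊆ V₂`, `dim V₁ = 1` and `dim V₂ = p+q-2`. -/
def FlagPQ (p q : ℕ) : Type :=
  {VW : Submodule ℝ (Fin (p + q) → ℝ) × Submodule ℝ (Fin (p + q) → ℝ) //
    VW.1 ≤ VW.2 ∧ finrank ℝ VW.1 = 1 ∧ finrank ℝ VW.2 = p + q - 2}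

/-- Two flags lie in the same `O(p,q)`-orbit: there is a linear automorphism of `ℝ^(p+q)`
preserving the standard form of signature `(p,q)` carrying one flag to the other. -/
def orbitRel (p q : ℕ) (F G : FlagPQ p q) : Prop :=
  ∃ g : (Fin (p + q) → ℝ) ≃ₗ[ℝ] (Fin (p + q) → ℝ),
    (∀ x y, stdForm p q (g x) (g y) = stdForm p q x y) ∧
      F.1.1 = (G.1.1).map g.toLinearMap ∧ F.1.2 = (G.1.2).map g.toLinearMap

/-!
The form being nondegenerate, a flag `(V₁, V₂)` is the same thing as the line `V₁` together with
the plane `V₂ᗮ` orthogonal to it. By Sylvester's law of inertia every subspace has an orthogonal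
basis with norms in `{0, 1, -1}` whose multiset of norms, the inertia, is an isometry invariant, and
by Witt's theorem two linearly independent families with the same Gram matrix are conjugate. If
`V₁` meets `V₂ᗮ` trivially, bases of the two together form an orthogonal family, so the orbit is
determined by the two inertias: `3 * 6` possibilities. Otherwise `V₁` is an isotropic line in the
radical of `V₂ᗮ`, and the orbit is determined by the inertia `{0, a}` of `V₂ᗮ`: `3` possibilities.
For `p, q ≥ 3` there are three orthogonal hyperbolic planes, which contain vectors of any three
prescribed norms, so all `21` possibilities occur.
-/

section Orthogonal

variable {R V : Type*} [CommSemiring R] [AddCommMonoid V] [Module R V] {B : LinearMap.BilinForm R V}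

theorem map_orthogonal {W : Type*} [AddCommMonoid W] [Module R W] {B' : LinearMap.BilinForm R W}
    (g : B.IsometryEquiv B') (U : Submodule R V) :
    (B.orthogonal U).map g.toLinearEquiv.toLinearMap =
      B'.orthogonal (U.map g.toLinearEquiv.toLinearMap) := by
  ext x
  obtain ⟨x, rfl⟩ := g.toLinearEquiv.surjective x
  have mem_orthogonal_iff :
      g x ∈ B'.orthogonal (U.map g.toLinearEquiv.toLinearMap) ↔ ∀ u ∈ U, B' (g u) (g x) = 0 :=
    Set.forall_mem_image
  simp only [g.map_app] at mem_orthogonal_iff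
  exact (g.toLinearEquiv.injective.mem_set_image (s := B.orthogonal U)).trans
    mem_orthogonal_iff.symm

theorem span_le_orthogonal_span {ι κ : Type*} {u : ι → V} {v : κ → V}
    (h : ∀ i j, B (v j) (u i) = 0) :
    Submodule.span R (Set.range u) ≤ B.orthogonal (Submodule.span R (Set.range v)) := by
  rw [Submodule.span_le]
  rintro _ ⟨i, rfl⟩ y hy
  have span_le_ker : Submodule.span R (Set.range v) ≤ LinearMap.ker (B.flip (u i)) :=
    Submodule.span_le.2 (Set.range_subset_iff.2 (h i))
  exact span_le_ker hy

theorem le_orthogonal_sup {L U W : Submodule R V} (hU : L ≤ B.orthogonal U)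
    (hW : L ≤ B.orthogonal W) : L ≤ B.orthogonal (U ⊔ W) := by
  intro x hx y hy
  obtain ⟨u, hu, w, hw, rfl⟩ := Submodule.mem_sup.1 hy
  change B (u + w) x = 0
  rw [map_add, LinearMap.add_apply, hU hx u hu, hW hx w hw, add_zero]

end Orthogonal

section Witt

variable {K V : Type*} [Field K] [AddCommGroup V] [Module K V] {B : LinearMap.BilinForm K V}

theorem exists_isometryEquiv_of_apply_sub_self_ne_zero (hB : B.IsSymm) {v w : V}
    (hvw : B v v = B w w) (hd : B (v - w) (v - w) ≠ 0) :
    ∃ g : B.IsometryEquiv B, g v = w ∧ ∀ x, B (v - w) x = 0 → g x = x := by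
  set d := v - w with hd_def
  have h_two : ((2 / B d d) • B d) d = 2 := by simp [hd]
  have isometric (x y : V) : B (reflection h_two x) (reflection h_two y) = B x y := by
    simp only [reflection_apply, LinearMap.smul_apply, smul_eq_mul, map_sub, map_smul,
      LinearMap.sub_apply, hB.eq x d]
    field_simp
    ring
  have norm_eq : 2 * B d v = B d d := by
    simp only [hd_def, map_sub, LinearMap.sub_apply, hB.eq w v]
    linear_combination hvw
  refine ⟨⟨reflection h_two, isometric⟩, ?_, fun x hx ↦ ?_⟩
  · have h_coeff : 2 / B d d * B d v = 1 := by rw [div_mul_eq_mul_div, norm_eq, div_self hd]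
    change reflection h_two v = w
    rw [reflection_apply, LinearMap.smul_apply, smul_eq_mul, h_coeff, one_smul, hd_def,
      sub_sub_cancel]
  · change reflection h_two x = x
    simp [reflection_apply, hx]

variable [FiniteDimensional K V]

theorem exists_mem_orthogonal_apply_ne_zero (hB : B.IsRefl) (hB' : B.Nondegenerate)
    {S : Submodule K V} {v : V} (hv : v ∉ S) : ∃ y ∈ B.orthogonal S, B v y ≠ 0 := by
  by_contra! h
  refine hv (LinearMap.BilinForm.orthogonal_orthogonal hB' hB S ▸ fun y hy ↦ ?_)
  exact hB _ _ (h y hy)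

theorem exists_siegel_transvection (hB : B.IsSymm) (hB' : B.Nondegenerate) [NeZero (2 : K)]
    {d y : V} (hd : B d d = 0) (hdy : B d y = 0) :
    ∃ g : B.IsometryEquiv B,
      ∀ x, g x = x + B d x • y - B y x • d - (B y y / 2 * B d x) • d := by
  let E : V →ₗ[K] V :=
    LinearMap.id + (B d).smulRight y - (B y).smulRight d - ((B y y / 2) • B d).smulRight d
  have E_apply (x : V) : E x = x + B d x • y - B y x • d - (B y y / 2 * B d x) • d := rfl
  have isometric (x z : V) : B (E x) (E z) = B x z := by
    simp only [E_apply, map_add, map_sub, map_smul, LinearMap.add_apply, LinearMap.sub_apply,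
      LinearMap.smul_apply, smul_eq_mul, hd, hdy, hB.eq y d, hB.eq x d, hB.eq x y]
    field_simp
    ring
  have injective : Function.Injective E := by
    rw [injective_iff_map_eq_zero]
    intro x hx
    exact hB'.1 x fun z ↦ by rw [← isometric, hx, map_zero, LinearMap.zero_apply]
  exact ⟨⟨LinearEquiv.ofInjectiveEndo E injective, isometric⟩, E_apply⟩

theorem exists_isometryEquiv_apply_eq_sub (hB : B.IsSymm) (hB' : B.Nondegenerate)
    [NeZero (2 : K)] {S : Submodule K V} {d v : V} (hd : d ∈ B.orthogonal S) (hdd : B d d = 0)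
    (hdv : B d v = 0) (hv : v ∉ S ⊔ Submodule.span K {d}) :
    ∃ g : B.IsometryEquiv B, g v = v - d ∧ ∀ s ∈ S, g s = s := by
  obtain ⟨z, hz, hvz⟩ := exists_mem_orthogonal_apply_ne_zero hB.isRefl hB' hv
  have hdz : B d z = 0 := hz d (Submodule.mem_sup_right (Submodule.mem_span_singleton_self d))
  obtain ⟨g, hg⟩ := exists_siegel_transvection hB hB' hdd (y := (B v z)⁻¹ • z) (by simp [hdz])
  refine ⟨g, ?_, fun s hs ↦ ?_⟩
  · simp [hg, hdv, hB.eq z v, hvz]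
  · have hds : B d s = 0 := hB.isRefl _ _ (hd s hs)
    have hzs : B z s = 0 := hB.isRefl _ _ (hz s (Submodule.mem_sup_left hs))
    simp [hg, hds, hzs]

theorem exists_hyperbolic_partner (hB : B.IsSymm) (hB' : B.Nondegenerate) [NeZero (2 : K)]
    {S : Submodule K V} {d : V} (hd : d ∈ B.orthogonal S) (hdS : d ∉ S) (hdd : B d d = 0) :
    ∃ y ∈ B.orthogonal S, B d y = 1 ∧ B y y = 0 := by
  obtain ⟨z, hz, hdz⟩ := exists_mem_orthogonal_apply_ne_zero hB.isRefl hB' hdS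
  let y := (B d z)⁻¹ • z - (B z z / (2 * B d z ^ 2)) • d
  refine ⟨y, sub_mem (Submodule.smul_mem _ _ hz) (Submodule.smul_mem _ _ hd), ?_, ?_⟩
  · simp [y, hdd, hdz]
  · simp only [y, map_sub, map_smul, LinearMap.sub_apply, LinearMap.smul_apply, smul_eq_mul, hdd,
      hB.eq z d]
    field_simp
    ring

theorem exists_isometryEquiv_apply_eq_smul (hB : B.IsSymm) (hB' : B.Nondegenerate)
    [NeZero (2 : K)] {S : Submodule K V} {d : V} (hd : d ∈ B.orthogonal S) (hdS : d ∉ S)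
    (hdd : B d d = 0) {a : K} (ha : a ≠ 0) :
    ∃ g : B.IsometryEquiv B, g d = a • d ∧ ∀ s ∈ S, g s = s := by
  obtain ⟨y, hy, hdy, hyy⟩ := exists_hyperbolic_partner hB hB' hd hdS hdd
  have hyd : B y d = 1 := hB.eq d y ▸ hdy
  obtain ⟨g₁, hg₁d, hg₁⟩ := exists_isometryEquiv_of_apply_sub_self_ne_zero hB
    (v := d) (w := y) (hdd.trans hyy.symm)
    (by simp [hdd, hyy, hdy, hyd, ← neg_add', one_add_one_eq_two, two_ne_zero])
  obtain ⟨g₂, hg₂y, hg₂⟩ := exists_isometryEquiv_of_apply_sub_self_ne_zero hB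
    (v := y) (w := a • d) (by simp [hdd, hyy])
    (by simp [hdd, hyy, hdy, hyd, ← neg_add', ← two_mul, two_ne_zero, ha])
  refine ⟨g₁.trans g₂, (congrArg g₂ hg₁d).trans hg₂y, fun s hs ↦ ?_⟩
  have hsd : B d s = 0 := hB.isRefl _ _ (hd s hs)
  have hsy : B y s = 0 := hB.isRefl _ _ (hy s hs)
  calc g₂ (g₁ s) = g₂ s := by rw [hg₁ s (by simp [hsd, hsy])]
    _ = s := hg₂ s (by simp [hsd, hsy])

/-- With `d = v - w` orthogonal to `S`, the isometry is the reflection in `d` if `d` is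
anisotropic, a Siegel transvection along `d` if `v ∉ S + ⟨d⟩`, and a rescaling of `d` otherwise. -/
theorem exists_isometryEquiv_apply_eq_of_fixing (hB : B.IsSymm) (hB' : B.Nondegenerate)
    [NeZero (2 : K)] {S : Submodule K V} {v w : V} (hv : v ∉ S) (hw : w ∉ S)
    (hvw : B v v = B w w) (hS : ∀ s ∈ S, B s v = B s w) :
    ∃ g : B.IsometryEquiv B, g v = w ∧ ∀ s ∈ S, g s = s := by
  obtain ⟨d, rfl⟩ : ∃ d, w = v - d := ⟨v - w, (sub_sub_cancel v w).symm⟩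
  have hd : d ∈ B.orthogonal S := fun s hs ↦
    sub_eq_self.1 ((map_sub (B s) v d).symm.trans (hS s hs).symm)
  rcases ne_or_eq (B d d) 0 with hdd | hdd
  · obtain ⟨g, hgv, hg⟩ := exists_isometryEquiv_of_apply_sub_self_ne_zero hB hvw
      (by rwa [sub_sub_cancel])
    exact ⟨g, hgv, fun s hs ↦ hg s (by rw [sub_sub_cancel, hB.isRefl _ _ (hd s hs)])⟩
  by_cases hvS : v ∈ S ⊔ Submodule.span K {d}
  · obtain ⟨s, hs, _, hcd, rfl⟩ := Submodule.mem_sup.1 hvS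
    obtain ⟨c, rfl⟩ := Submodule.mem_span_singleton.1 hcd
    have hdS : d ∉ S := fun h ↦ hv (S.add_mem hs (S.smul_mem c h))
    have hc : c ≠ 0 := by rintro rfl; simp [hs] at hv
    have hc_sub : c - 1 ≠ 0 := fun h ↦ hw (by simpa [sub_eq_zero.1 h] using hs)
    obtain ⟨g, hgd, hg⟩ := exists_isometryEquiv_apply_eq_smul hB hB' hd hdS hdd
      (div_ne_zero hc_sub hc)
    refine ⟨g, ?_, hg⟩
    rw [map_add, map_smul, hg s hs, hgd, smul_smul, mul_div_cancel₀ _ hc]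
    module
  · have hdv : B d v = 0 := by
      have two_mul_eq_zero : 2 * B d v = 0 := by
        simp only [map_sub, LinearMap.sub_apply, hdd, hB.eq v d] at hvw
        linear_combination hvw
      exact (mul_eq_zero.1 two_mul_eq_zero).resolve_left two_ne_zero
    exact exists_isometryEquiv_apply_eq_sub hB hB' hd hdd hdv hvS

theorem witt_exists_isometryEquiv {ι : Type*} (hB : B.IsSymm) (hB' : B.Nondegenerate)
    [NeZero (2 : K)] {v w : ι → V} (hv : LinearIndependent K v) (hw : LinearIndependent K w)
    (hvw : ∀ i j, B (v i) (v j) = B (w i) (w j)) :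
    ∃ g : B.IsometryEquiv B, ∀ i, g (v i) = w i := by
  classical
  have : Finite ι := hv.finite
  have := Fintype.ofFinite ι
  suffices ∀ t : Finset ι, ∃ g : B.IsometryEquiv B, ∀ i ∈ t, g (v i) = w i by
    simpa using this Finset.univ
  intro t
  induction t using Finset.induction_on with
  | empty => exact ⟨.refl B, by simp⟩
  | insert j t hj ih =>
    obtain ⟨g, hg⟩ := ih
    have span_eq : (Submodule.span K (v '' t)).map g.toLinearEquiv.toLinearMap =
        Submodule.span K (w '' t) := by
      rw [Submodule.map_span, Set.image_image]
      exact congrArg _ (Set.image_congr hg)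
    have hgv : g (v j) ∉ Submodule.span K (w '' t) := by
      rw [← span_eq]
      rintro ⟨x, hx, hxj⟩
      exact hv.notMem_span_image (Finset.mem_coe.not.2 hj)
        (g.toLinearEquiv.injective hxj ▸ hx)
    have agree : Set.EqOn (B.flip (g (v j))) (B.flip (w j)) (Submodule.span K (w '' t)) := by
      refine LinearMap.eqOn_span' ?_
      rintro _ ⟨i, hi, rfl⟩
      rw [LinearMap.BilinForm.flip_apply, LinearMap.BilinForm.flip_apply, ← hvw, ← hg i hi,
        g.map_app]
    obtain ⟨h, hh, hfix⟩ := exists_isometryEquiv_apply_eq_of_fixing hB hB' hgv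
      (hw.notMem_span_image (Finset.mem_coe.not.2 hj)) (by rw [g.map_app, hvw])
      fun s hs ↦ agree hs
    refine ⟨g.trans h, fun i hi ↦ ?_⟩
    rcases Finset.mem_insert.1 hi with rfl | hi
    · exact hh
    · calc h (g (v i)) = h (w i) := by rw [hg i hi]
        _ = w i := hfix _ (Submodule.subset_span ⟨i, hi, rfl⟩)

end Witt

theorem exists_equiv_of_map_univ_eq {ι κ α : Type*} [Fintype ι] [Fintype κ]
    {s : ι → α} {t : κ → α} (h : Finset.univ.val.map s = Finset.univ.val.map t) :
    ∃ e : ι ≃ κ, ∀ i, t (e i) = s i := by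
  classical
  have card_fiber (a : α) : Fintype.card {i // s i = a} = Fintype.card {j // t j = a} := by
    simpa [Multiset.count_map, Fintype.card_subtype, Finset.card_def, Finset.filter_val, eq_comm]
      using congrArg (Multiset.count a) h
  exact ⟨.ofFiberEquiv fun a ↦ Fintype.equivOfCardEq (card_fiber a), Equiv.ofFiberEquiv_map _⟩

theorem sign_coe (a : SignType) : SignType.sign (a : ℝ) = a := by cases a <;> simp

section Inertia

/-- The inertia of a real quadratic form: the multiset of signs of the coefficients in any
diagonalization of it. -/
def inertia {M : Type*} [AddCommGroup M] [Module ℝ M] (Q : QuadraticForm ℝ M) :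
    Multiset SignType :=
  .replicate (sigPos Q) 1 + .replicate (sigNeg Q) (-1) + .replicate (finrank ℝ Q.radical) 0

theorem inertia_eq_of_equivalent {M N : Type*} [AddCommGroup M] [Module ℝ M] [AddCommGroup N]
    [Module ℝ N] {Q : QuadraticForm ℝ M} {R : QuadraticForm ℝ N} (h : Q.Equivalent R) :
    inertia Q = inertia R := by
  rw [inertia, inertia, h.sigPos_eq, h.sigNeg_eq, h.rank_radical_eq]

theorem inertia_weightedSumSquares {ι : Type*} [Fintype ι] (d : ι → ℝ) :
    inertia (QuadraticMap.weightedSumSquares ℝ d) =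
      Finset.univ.val.map fun i ↦ SignType.sign (d i) := by
  classical
  rw [inertia, QuadraticForm.sigPos_weightedSumSquares, QuadraticForm.sigNeg_weightedSumSquares,
    QuadraticForm.radical_weightedSumSquares, Pi.dim_spanSubset]
  have count_eq (a : SignType) : (Finset.univ.val.map fun i ↦ SignType.sign (d i)).count a =
      {i | SignType.sign (d i) = a}.ncard := by
    rw [Multiset.count_map, Set.ncard_eq_toFinset_card', Set.toFinset_ofPred]
    simp [Finset.card_def, Finset.filter_val, eq_comm]
  ext a
  rw [count_eq]
  cases a <;> simp [Multiset.count_replicate, sign_eq_one_iff, sign_eq_neg_one_iff]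

variable {V : Type*} [AddCommGroup V] [Module ℝ V] {B : LinearMap.BilinForm ℝ V}

/-- The inertia of the restriction of a bilinear form to a subspace. -/
def inertiaOn (B : LinearMap.BilinForm ℝ V) (U : Submodule ℝ V) : Multiset SignType :=
  inertia (B.toQuadraticMap.restrict U)

/-- A linearly independent family whose Gram matrix is diagonal with entries `d`. -/
structure IsOrthogonalFrame {ι : Type*} (B : LinearMap.BilinForm ℝ V) (d : ι → ℝ) (v : ι → V) :
    Prop where
  linearIndependent : LinearIndependent ℝ v
  apply_self (i : ι) : B (v i) (v i) = d i
  apply_of_ne : Pairwise fun i j ↦ B (v i) (v j) = 0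

variable {ι κ : Type*}

theorem IsOrthogonalFrame.comp {d : ι → ℝ} {v : ι → V} (hv : IsOrthogonalFrame B d v) {f : κ → ι}
    (hf : f.Injective) : IsOrthogonalFrame B (d ∘ f) (v ∘ f) where
  linearIndependent := hv.linearIndependent.comp f hf
  apply_self i := hv.apply_self (f i)
  apply_of_ne _ _ hij := hv.apply_of_ne (hf.ne hij)

theorem IsOrthogonalFrame.inertiaOn_span [Fintype ι] {d : ι → ℝ} {v : ι → V}
    (hv : IsOrthogonalFrame B d v) :
    inertiaOn B (Submodule.span ℝ (Set.range v)) =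
      Finset.univ.val.map fun i ↦ SignType.sign (d i) := by
  let Q := B.toQuadraticMap.restrict (Submodule.span ℝ (Set.range v))
  let b := Basis.span hv.linearIndependent
  have b_coe (i : ι) : (b i : V) = v i :=
    congrArg Subtype.val (Basis.span_apply hv.linearIndependent i)
  have ortho : (QuadraticMap.associated (R := ℝ) Q).IsOrthoᵢ b := fun i j hij ↦ by
    simp [Function.onFun, Q, QuadraticMap.associated_apply, b_coe, hv.apply_of_ne hij,
      hv.apply_of_ne hij.symm]
  have diag (i : ι) : Q (b i) = d i := by simp [Q, b_coe, hv.apply_self]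
  have equivalent : Q.Equivalent (QuadraticMap.weightedSumSquares ℝ d) := by
    rw [← funext diag, ← QuadraticMap.basisRepr_eq_of_iIsOrtho Q b ortho]
    exact ⟨Q.isometryEquivBasisRepr b⟩
  rw [inertiaOn, inertia_eq_of_equivalent equivalent, inertia_weightedSumSquares]

theorem exists_isOrthogonalFrame_of_equivalent [Fintype ι] (hB : B.IsSymm) {U : Submodule ℝ V}
    {d : ι → ℝ}
    (h : (B.toQuadraticMap.restrict U).Equivalent (QuadraticMap.weightedSumSquares ℝ d)) :
    ∃ v : ι → V, IsOrthogonalFrame B d v ∧ Submodule.span ℝ (Set.range v) = U := by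
  classical
  obtain ⟨e⟩ := h
  let b : Basis ι ℝ U := .ofEquivFun e.toLinearEquiv
  have b_eq (i : ι) : b i = e.symm (Pi.single i 1) := by simp [b]
  have norm (x : ι → ℝ) : B (e.symm x : V) (e.symm x : V) = ∑ k, d k * (x k * x k) :=
    (e.symm.map_app x).trans (QuadraticMap.weightedSumSquares_apply d x)
  have norm_self (i : ι) : B (b i : V) (b i : V) = d i := by simp [b_eq, norm, Pi.single_apply]
  refine ⟨fun i ↦ b i, ⟨b.linearIndependent.map' _ U.ker_subtype, norm_self, fun i j hij ↦ ?_⟩, ?_⟩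
  · have norm_add : B (b i + b j : V) (b i + b j) = d i + d j := by
      rw [b_eq, b_eq, ← Submodule.coe_add, ← map_add, norm]
      simp [Pi.single_apply, mul_add, Finset.sum_add_distrib, hij, hij.symm]
    simp only [map_add, LinearMap.add_apply, norm_self, hB.eq (b j : V) (b i)] at norm_add
    linarith
  · change Submodule.span ℝ (Set.range (U.subtype ∘ b)) = U
    rw [Set.range_comp, ← Submodule.map_span, b.span_eq, Submodule.map_top, U.range_subtype]

theorem exists_isOrthogonalFrame [Fintype ι] [FiniteDimensional ℝ V] (hB : B.IsSymm)
    {U : Submodule ℝ V} {s : ι → SignType} (h : inertiaOn B U = Finset.univ.val.map s) :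
    ∃ v : ι → V, IsOrthogonalFrame B (fun i ↦ (s i : ℝ)) v ∧
      Submodule.span ℝ (Set.range v) = U := by
  obtain ⟨w, hw⟩ :=
    QuadraticForm.equivalent_signType_weighted_sum_squared (B.toQuadraticMap.restrict U)
  obtain ⟨u, hu, hU⟩ := exists_isOrthogonalFrame_of_equivalent hB hw
  obtain ⟨e, he⟩ : ∃ e : ι ≃ Fin _, ∀ i, w (e i) = s i :=
    exists_equiv_of_map_univ_eq (by simpa only [sign_coe, hU, h] using hu.inertiaOn_span)
  refine ⟨u ∘ e, ?_, (congrArg _ (e.surjective.range_comp u)).trans hU⟩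
  simpa only [Function.comp_def, he] using hu.comp e.injective

theorem inertiaOn_map {W : Type*} [AddCommGroup W] [Module ℝ W] {B' : LinearMap.BilinForm ℝ W}
    (g : B.IsometryEquiv B') (U : Submodule ℝ V) :
    inertiaOn B' (U.map g.toLinearEquiv.toLinearMap) = inertiaOn B U :=
  (inertia_eq_of_equivalent
    ⟨⟨g.toLinearEquiv.submoduleMap U, fun x ↦ g.map_app (x : V) (x : V)⟩⟩).symm

theorem IsOrthogonalFrame.sum {d : ι → ℝ} {e : κ → ℝ} {u : ι → V} {v : κ → V} (hB : B.IsSymm)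
    (hu : IsOrthogonalFrame B d u) (hv : IsOrthogonalFrame B e v)
    (disjoint : Disjoint (Submodule.span ℝ (Set.range u)) (Submodule.span ℝ (Set.range v)))
    (ortho : Submodule.span ℝ (Set.range u) ≤ B.orthogonal (Submodule.span ℝ (Set.range v))) :
    IsOrthogonalFrame B (Sum.elim d e) (Sum.elim u v) where
  linearIndependent := hu.linearIndependent.sum_type hv.linearIndependent disjoint
  apply_self := Sum.rec hu.apply_self hv.apply_self
  apply_of_ne := by
    have apply_vu (i : ι) (j : κ) : B (v j) (u i) = 0 :=
      ortho (Submodule.subset_span ⟨i, rfl⟩) _ (Submodule.subset_span ⟨j, rfl⟩)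
    rintro (i | i) (j | j) hij
    · exact hu.apply_of_ne (mt (congrArg Sum.inl) hij)
    · exact hB.isRefl _ _ (apply_vu i j)
    · exact apply_vu j i
    · exact hv.apply_of_ne (mt (congrArg Sum.inr) hij)

section FiniteDimensional

variable [FiniteDimensional ℝ V]

theorem exists_isOrthogonalFrame_toType (hB : B.IsSymm) {U : Submodule ℝ V}
    {S : Multiset SignType} (h : inertiaOn B U = S) :
    ∃ v : S → V, IsOrthogonalFrame B (fun i : S ↦ ((i : SignType) : ℝ)) v ∧
      Submodule.span ℝ (Set.range v) = U :=
  exists_isOrthogonalFrame hB (h.trans S.map_univ_coe.symm)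

theorem IsOrthogonalFrame.exists_isometryEquiv {d : ι → ℝ} {v w : ι → V} (hB : B.IsSymm)
    (hB' : B.Nondegenerate) (hv : IsOrthogonalFrame B d v) (hw : IsOrthogonalFrame B d w) :
    ∃ g : B.IsometryEquiv B, ∀ i, g (v i) = w i := by
  refine witt_exists_isometryEquiv hB hB' hv.linearIndependent hw.linearIndependent fun i j ↦ ?_
  rcases eq_or_ne i j with rfl | hij
  · rw [hv.apply_self, hw.apply_self]
  · rw [hv.apply_of_ne hij, hw.apply_of_ne hij]

theorem card_inertiaOn (hB : B.IsSymm) (U : Submodule ℝ V) :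
    (inertiaOn B U).card = finrank ℝ U := by
  obtain ⟨v, hv, hU⟩ := exists_isOrthogonalFrame_toType hB (U := U) rfl
  rw [← Multiset.card_coe, ← finrank_span_eq_card hv.linearIndependent, hU]

theorem inertiaOn_sup (hB : B.IsSymm) {U W : Submodule ℝ V} (disjoint : Disjoint U W)
    (ortho : U ≤ B.orthogonal W) : inertiaOn B (U ⊔ W) = inertiaOn B U + inertiaOn B W := by
  generalize hS : inertiaOn B U = S
  generalize hT : inertiaOn B W = T
  obtain ⟨u, hu, rfl⟩ := exists_isOrthogonalFrame_toType hB hS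
  obtain ⟨w, hw, rfl⟩ := exists_isOrthogonalFrame_toType hB hT
  rw [← Submodule.span_union, ← Set.Sum.elim_range, (hu.sum hB hw disjoint ortho).inertiaOn_span,
    ← Finset.univ_disjSum_univ, Finset.val_disjSum, Multiset.disjSum, Multiset.map_add,
    Multiset.map_map, Multiset.map_map]
  simp only [Function.comp_def, Sum.elim_inl, Sum.elim_inr, sign_coe, Multiset.map_univ_coe]

theorem forall_mem_inertiaOn_eq_zero_iff (hB : B.IsSymm) {U : Submodule ℝ V} :
    (∀ a ∈ inertiaOn B U, a = 0) ↔ U ≤ B.orthogonal U := by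
  obtain ⟨u, hu, hU⟩ := exists_isOrthogonalFrame_toType hB (U := U) rfl
  refine ⟨fun h ↦ ?_, fun h a ha ↦ ?_⟩
  · rw [← hU]
    refine span_le_orthogonal_span fun i j ↦ ?_
    rcases eq_or_ne j i with rfl | hij
    · rw [hu.apply_self, h _ Multiset.coe_mem, SignType.coe_zero]
    · exact hu.apply_of_ne hij
  · rw [← Multiset.map_univ_coe (inertiaOn B U)] at ha
    obtain ⟨i, -, rfl⟩ := Multiset.mem_map.1 ha
    have hui : u i ∈ U := hU ▸ Submodule.subset_span ⟨i, rfl⟩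
    have coe_eq_zero : ((i : SignType) : ℝ) = 0 := (hu.apply_self i).symm.trans (h hui _ hui)
    simpa [sign_coe] using congrArg SignType.sign coe_eq_zero

theorem inertiaOn_eq_replicate_of_le_orthogonal (hB : B.IsSymm) {U : Submodule ℝ V}
    (h : U ≤ B.orthogonal U) : inertiaOn B U = .replicate (finrank ℝ U) 0 :=
  Multiset.eq_replicate.2 ⟨card_inertiaOn hB U, (forall_mem_inertiaOn_eq_zero_iff hB).2 h⟩

theorem exists_disjoint_sup_eq_inertiaOn_eq (hB : B.IsSymm) {L U : Submodule ℝ V} (hLU : L ≤ U)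
    (ortho : L ≤ B.orthogonal U) :
    ∃ C, Disjoint L C ∧ L ≤ B.orthogonal C ∧ L ⊔ C = U ∧
      inertiaOn B U = .replicate (finrank ℝ L) 0 + inertiaOn B C := by
  obtain ⟨C, disjoint, rfl⟩ := IsModularLattice.exists_disjoint_and_sup_eq hLU
  have ortho_compl := ortho.trans (LinearMap.BilinForm.orthogonal_le le_sup_right)
  refine ⟨C, disjoint, ortho_compl, rfl, ?_⟩
  rw [inertiaOn_sup hB disjoint ortho_compl, inertiaOn_eq_replicate_of_le_orthogonal hB
    (ortho.trans (LinearMap.BilinForm.orthogonal_le le_sup_left))]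

theorem exists_isometryEquiv_map_eq_of_disjoint (hB : B.IsSymm) (hB' : B.Nondegenerate)
    {L U L' U' : Submodule ℝ V} (disjoint : Disjoint L U) (ortho : L ≤ B.orthogonal U)
    (disjoint' : Disjoint L' U') (ortho' : L' ≤ B.orthogonal U')
    (hL : inertiaOn B L = inertiaOn B L') (hU : inertiaOn B U = inertiaOn B U') :
    ∃ g : B.IsometryEquiv B, L.map g.toLinearEquiv.toLinearMap = L' ∧
      U.map g.toLinearEquiv.toLinearMap = U' := by
  generalize hS : inertiaOn B L' = S at hL
  generalize hT : inertiaOn B U' = T at hU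
  obtain ⟨l, hl, rfl⟩ := exists_isOrthogonalFrame_toType hB hL
  obtain ⟨u, hu, rfl⟩ := exists_isOrthogonalFrame_toType hB hU
  obtain ⟨l', hl', rfl⟩ := exists_isOrthogonalFrame_toType hB hS
  obtain ⟨u', hu', rfl⟩ := exists_isOrthogonalFrame_toType hB hT
  obtain ⟨g, hg⟩ := (hl.sum hB hu disjoint ortho).exists_isometryEquiv hB hB'
    (hl'.sum hB hu' disjoint' ortho')
  refine ⟨g, ?_, ?_⟩ <;> rw [Submodule.map_span, ← Set.range_comp]
  · exact congrArg _ (congrArg Set.range (funext fun i ↦ hg (.inl i)))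
  · exact congrArg _ (congrArg Set.range (funext fun i ↦ hg (.inr i)))

theorem exists_isometryEquiv_map_eq_of_le (hB : B.IsSymm) (hB' : B.Nondegenerate)
    {L U L' U' : Submodule ℝ V} (hLU : L ≤ U) (ortho : L ≤ B.orthogonal U) (hLU' : L' ≤ U')
    (ortho' : L' ≤ B.orthogonal U') (hL : finrank ℝ L = finrank ℝ L')
    (hU : inertiaOn B U = inertiaOn B U') :
    ∃ g : B.IsometryEquiv B, L.map g.toLinearEquiv.toLinearMap = L' ∧
      U.map g.toLinearEquiv.toLinearMap = U' := by
  obtain ⟨C, disjoint, ortho_compl, rfl, inertiaOn_eq⟩ :=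
    exists_disjoint_sup_eq_inertiaOn_eq hB hLU ortho
  obtain ⟨C', disjoint', ortho_compl', rfl, inertiaOn_eq'⟩ :=
    exists_disjoint_sup_eq_inertiaOn_eq hB hLU' ortho'
  have inertiaOn_compl : inertiaOn B C = inertiaOn B C' := by
    rwa [inertiaOn_eq, inertiaOn_eq', hL, add_right_inj] at hU
  have inertiaOn_left : inertiaOn B L = inertiaOn B L' := by
    rw [inertiaOn_eq_replicate_of_le_orthogonal hB
        (ortho.trans (LinearMap.BilinForm.orthogonal_le le_sup_left)),
      inertiaOn_eq_replicate_of_le_orthogonal hB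
        (ortho'.trans (LinearMap.BilinForm.orthogonal_le le_sup_left)), hL]
  obtain ⟨g, rfl, rfl⟩ := exists_isometryEquiv_map_eq_of_disjoint hB hB' disjoint ortho_compl
    disjoint' ortho_compl' inertiaOn_left inertiaOn_compl
  exact ⟨g, rfl, Submodule.map_sup ..⟩

end FiniteDimensional

end Inertia

section StdForm

variable {p q : ℕ}

theorem stdForm_apply (x y : Fin (p + q) → ℝ) :
    stdForm p q x y = ∑ i, x (Fin.castAdd q i) * y (Fin.castAdd q i) -
      ∑ j, x (Fin.natAdd p j) * y (Fin.natAdd p j) := by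
  rw [stdForm, Matrix.toLinearMap₂'_apply', dotProduct, Fin.sum_univ_add, sub_eq_add_neg,
    ← Finset.sum_neg_distrib]
  simp [Matrix.mulVec_diagonal]

theorem isSymm_stdForm : (stdForm p q).IsSymm :=
  ⟨fun x y ↦ by simp [stdForm_apply, mul_comm]⟩

theorem nondegenerate_stdForm : (stdForm p q).Nondegenerate := by
  have det_ne_zero :
      (Matrix.diagonal fun i : Fin (p + q) ↦ if (i : ℕ) < p then (1 : ℝ) else -1).det ≠ 0 := by
    rw [Matrix.det_diagonal]
    exact Finset.prod_ne_zero_iff.2 fun i _ ↦ by split <;> norm_num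
  exact (Matrix.nondegenerate_of_det_ne_zero det_ne_zero).toLinearMap₂'

theorem exists_isOrthogonalFrame_stdForm {ι : Type*} [Fintype ι] (hp : Fintype.card ι ≤ p)
    (hq : Fintype.card ι ≤ q) (d : ι → ℝ) :
    ∃ v : ι → Fin (p + q) → ℝ, IsOrthogonalFrame (stdForm p q) d v := by
  classical
  obtain ⟨f⟩ : Nonempty (ι ↪ Fin p) := Function.Embedding.nonempty_of_card_le (by simpa)
  obtain ⟨g⟩ : Nonempty (ι ↪ Fin q) := Function.Embedding.nonempty_of_card_le (by simpa)
  -- The coefficients `α, β` solve `α ^ 2 - β ^ 2 = d i` and `α - β = 1`.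
  let v (i : ι) : Fin (p + q) → ℝ :=
    Fin.append (Pi.single (f i) ((d i + 1) / 2)) (Pi.single (g i) ((d i - 1) / 2))
  let T : (Fin (p + q) → ℝ) →ₗ[ℝ] ι → ℝ :=
    LinearMap.funLeft ℝ ℝ (Fin.castAdd q ∘ f) - LinearMap.funLeft ℝ ℝ (Fin.natAdd p ∘ g)
  have T_comp_v : T ∘ v = fun i ↦ Pi.single i 1 := by
    ext i j
    rcases eq_or_ne j i with rfl | hij
    · simp only [Function.comp_apply, LinearMap.sub_apply, Pi.sub_apply, LinearMap.funLeft_apply,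
        Fin.append_left, Pi.single_eq_same, Fin.append_right, T, v]
      ring
    · simp [T, v, hij]
  refine ⟨v, .of_comp T (T_comp_v ▸ Pi.linearIndependent_single_one ι ℝ), fun i ↦ ?_,
    fun i j hij ↦ ?_⟩
  · simp only [stdForm_apply, Fin.append_left, Pi.single_apply, mul_ite, ite_mul, zero_mul,
      mul_zero, Finset.sum_ite_eq', Finset.mem_univ, if_true, Fin.append_right, v]
    ring
  · simp [stdForm_apply, v, Pi.single_apply, hij.symm]

theorem exists_disjoint_inertiaOn_stdForm_eq {S T : Multiset SignType} (hp : S.card + T.card ≤ p)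
    (hq : S.card + T.card ≤ q) :
    ∃ U W, Disjoint U W ∧ U ≤ (stdForm p q).orthogonal W ∧ inertiaOn (stdForm p q) U = S ∧
      inertiaOn (stdForm p q) W = T := by
  obtain ⟨v, hv⟩ := exists_isOrthogonalFrame_stdForm (p := p) (q := q) (ι := S ⊕ T) (by simpa)
    (by simpa)
    (Sum.elim (fun i ↦ ((i : SignType) : ℝ)) fun j ↦ ((j : SignType) : ℝ))
  have hv_inl := hv.comp Sum.inl_injective
  have hv_inr := hv.comp Sum.inr_injective
  refine ⟨Submodule.span ℝ (Set.range (v ∘ Sum.inl)), Submodule.span ℝ (Set.range (v ∘ Sum.inr)),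
    (linearIndependent_sum.1 hv.linearIndependent).2.2,
    span_le_orthogonal_span fun i j ↦ hv.apply_of_ne Sum.inr_ne_inl, ?_, ?_⟩
  · rw [hv_inl.inertiaOn_span]
    simp [sign_coe]
  · rw [hv_inr.inertiaOn_span]
    simp [sign_coe]

end StdForm

theorem card_quot_eq_card_of_label {α β : Type*} {r : α → α → Prop} {P : α → β → Prop}
    (existsUnique_label : ∀ x, ∃! b, P x b) (exists_of_label : ∀ b, ∃ x, P x b)
    (rel_iff : ∀ x y, r x y ↔ ∃ b, P x b ∧ P y b) : Nat.card (Quot r) = Nat.card β := by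
  choose label label_spec label_unique using existsUnique_label
  have label_eq_of_rel (x y : α) (h : r x y) : label x = label y := by
    obtain ⟨b, hx, hy⟩ := (rel_iff x y).1 h
    rw [← label_unique x b hx, label_unique y b hy]
  refine Nat.card_eq_of_bijective (Quot.lift label label_eq_of_rel) ⟨?_, fun b ↦ ?_⟩
  · rintro ⟨x⟩ ⟨y⟩ (h : label x = label y)
    exact Quot.sound ((rel_iff x y).2 ⟨label x, label_spec x, h ▸ label_spec y⟩)
  · obtain ⟨x, hx⟩ := exists_of_label b
    exact ⟨Quot.mk r x, (label_unique x b hx).symm⟩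

/-- The combinatorial types of flags `(V₁, V₂)`. The label `inl (S, c)` stands for a line `V₁` of
inertia `{c}` that meets the plane `V₂ᗮ` of inertia `S` trivially; the label `inr a` stands for a
line `V₁` contained in the plane `V₂ᗮ` of inertia `{0, a}`. -/
abbrev FlagLabel : Type := Sym SignType 2 × SignType ⊕ SignType

theorem card_flagLabel : Nat.card FlagLabel = 21 := by
  rw [Nat.card_eq_fintype_card]
  decide

namespace FlagPQ

variable {p q : ℕ}

/-- The first entry `V₁` of a flag. -/
def line (F : FlagPQ p q) : Submodule ℝ (Fin (p + q) → ℝ) := F.1.1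

/-- The orthogonal complement of the second entry `V₂` of a flag. Since `dim V₂ = p + q - 2`, it
is a plane, and `V₁ ⊆ V₂` says that it is orthogonal to the line `V₁`. -/
def plane (F : FlagPQ p q) : Submodule ℝ (Fin (p + q) → ℝ) := (stdForm p q).orthogonal F.1.2

theorem finrank_line (F : FlagPQ p q) : finrank ℝ F.line = 1 := F.2.2.1

theorem finrank_plane (h : 2 ≤ p + q) (F : FlagPQ p q) : finrank ℝ F.plane = 2 := by
  rw [plane, LinearMap.BilinForm.finrank_orthogonal nondegenerate_stdForm, finrank_fin_fun,
    F.2.2.2]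
  lia

theorem orthogonal_plane (F : FlagPQ p q) : (stdForm p q).orthogonal F.plane = F.1.2 :=
  LinearMap.BilinForm.orthogonal_orthogonal nondegenerate_stdForm isSymm_stdForm.isRefl _

theorem line_le_orthogonal_plane (F : FlagPQ p q) : F.line ≤ (stdForm p q).orthogonal F.plane :=
  F.orthogonal_plane ▸ F.2.1

theorem disjoint_or_le (F : FlagPQ p q) : Disjoint F.line F.plane ∨ F.line ≤ F.plane :=
  or_iff_not_imp_left.2 (Submodule.isAtom_iff_finrank_eq_one.2 F.finrank_line).not_disjoint_iff_le.1

theorem exists_line_eq_plane_eq {L U : Submodule ℝ (Fin (p + q) → ℝ)} (hL : finrank ℝ L = 1)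
    (hU : finrank ℝ U = 2) (ortho : L ≤ (stdForm p q).orthogonal U) :
    ∃ F : FlagPQ p q, F.line = L ∧ F.plane = U := by
  refine ⟨⟨(L, (stdForm p q).orthogonal U), ortho, hL, ?_⟩, rfl, ?_⟩
  · rw [LinearMap.BilinForm.finrank_orthogonal nondegenerate_stdForm, finrank_fin_fun, hU]
  · exact LinearMap.BilinForm.orthogonal_orthogonal nondegenerate_stdForm isSymm_stdForm.isRefl U

theorem orbitRel_iff {F G : FlagPQ p q} : orbitRel p q F G ↔
    ∃ g : (stdForm p q).IsometryEquiv (stdForm p q),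
      G.line.map g.toLinearEquiv.toLinearMap = F.line ∧
        G.plane.map g.toLinearEquiv.toLinearMap = F.plane := by
  constructor
  · rintro ⟨g, hg, hline, hplane⟩
    refine ⟨⟨g, hg⟩, hline.symm, ?_⟩
    rw [plane, map_orthogonal, plane, hplane]
  · rintro ⟨g, hline, hplane⟩
    refine ⟨g.toLinearEquiv, g.map_app', hline.symm, ?_⟩
    rw [← F.orthogonal_plane, ← hplane, ← map_orthogonal, G.orthogonal_plane]

/-- The flag has the combinatorial type described by the label. -/
def HasLabel (F : FlagPQ p q) : FlagLabel → Prop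
  | .inl (S, c) => Disjoint F.line F.plane ∧ inertiaOn (stdForm p q) F.line = {c} ∧
      inertiaOn (stdForm p q) F.plane = S
  | .inr a => F.line ≤ F.plane ∧ inertiaOn (stdForm p q) F.plane = {0, a}

theorem exists_hasLabel (h : 2 ≤ p + q) (F : FlagPQ p q) : ∃ b, F.HasLabel b := by
  rcases F.disjoint_or_le with disjoint | hle
  · obtain ⟨c, hc⟩ := Multiset.card_eq_one.1
      ((card_inertiaOn isSymm_stdForm F.line).trans F.finrank_line)
    exact ⟨.inl (⟨_, (card_inertiaOn isSymm_stdForm F.plane).trans (F.finrank_plane h)⟩, c),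
      disjoint, hc, rfl⟩
  · obtain ⟨C, -, -, -, inertiaOn_eq⟩ :=
      exists_disjoint_sup_eq_inertiaOn_eq isSymm_stdForm hle F.line_le_orthogonal_plane
    rw [F.finrank_line, Multiset.replicate_one] at inertiaOn_eq
    have card_eq : (inertiaOn (stdForm p q) C).card = 1 := by
      have card_plane := congrArg Multiset.card inertiaOn_eq
      rw [card_inertiaOn isSymm_stdForm F.plane, F.finrank_plane h, Multiset.card_add,
        Multiset.card_singleton] at card_plane
      lia
    obtain ⟨a, ha⟩ := Multiset.card_eq_one.1 card_eq
    exact ⟨.inr a, hle, by rw [inertiaOn_eq, ha]; rfl⟩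

theorem HasLabel.unique {F : FlagPQ p q} {b b' : FlagLabel} (hb : F.HasLabel b)
    (hb' : F.HasLabel b') : b = b' := by
  have line_ne_bot := (Submodule.isAtom_iff_finrank_eq_one.2 F.finrank_line).ne_bot
  rcases b with ⟨S, c⟩ | a <;> rcases b' with ⟨S', c'⟩ | a'
  · obtain ⟨-, hline, hplane⟩ := hb
    obtain ⟨-, hline', hplane'⟩ := hb'
    rw [Sym.coe_injective (hplane.symm.trans hplane'),
      Multiset.singleton_inj.1 (hline.symm.trans hline')]
  · exact absurd (hb.1.eq_bot_of_le hb'.1) line_ne_bot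
  · exact absurd (hb'.1.eq_bot_of_le hb.1) line_ne_bot
  · have pair_eq : ({0, a} : Multiset SignType) = {0, a'} := hb.2.symm.trans hb'.2
    rw [Multiset.singleton_inj.1 ((Multiset.cons_inj_right 0).1 pair_eq)]

theorem HasLabel.of_orbitRel {F G : FlagPQ p q} (h : orbitRel p q F G) {b : FlagLabel}
    (hG : G.HasLabel b) : F.HasLabel b := by
  obtain ⟨g, hline, hplane⟩ := orbitRel_iff.1 h
  rcases b with ⟨S, c⟩ | a
  · obtain ⟨disjoint, inertiaOn_line, inertiaOn_plane⟩ := hG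
    refine ⟨?_, ?_, ?_⟩
    · rw [← hline, ← hplane]
      exact disjoint.map_orderIso (Submodule.orderIsoMapComap g.toLinearEquiv)
    · rw [← hline, inertiaOn_map, inertiaOn_line]
    · rw [← hplane, inertiaOn_map, inertiaOn_plane]
  · obtain ⟨hle, inertiaOn_plane⟩ := hG
    refine ⟨?_, ?_⟩
    · rw [← hline, ← hplane]
      exact Submodule.map_mono hle
    · rw [← hplane, inertiaOn_map, inertiaOn_plane]

theorem HasLabel.orbitRel {F G : FlagPQ p q} {b : FlagLabel} (hF : F.HasLabel b)
    (hG : G.HasLabel b) : orbitRel p q F G := by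
  rw [orbitRel_iff]
  rcases b with ⟨S, c⟩ | a
  · exact exists_isometryEquiv_map_eq_of_disjoint isSymm_stdForm nondegenerate_stdForm
      hG.1 G.line_le_orthogonal_plane hF.1 F.line_le_orthogonal_plane
      (hG.2.1.trans hF.2.1.symm) (hG.2.2.trans hF.2.2.symm)
  · exact exists_isometryEquiv_map_eq_of_le isSymm_stdForm nondegenerate_stdForm
      hG.1 G.line_le_orthogonal_plane hF.1 F.line_le_orthogonal_plane
      (G.finrank_line.trans F.finrank_line.symm) (hG.2.trans hF.2.symm)

theorem exists_hasLabel_inl (hp : 3 ≤ p) (hq : 3 ≤ q) (S : Sym SignType 2) (c : SignType) :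
    ∃ F : FlagPQ p q, F.HasLabel (.inl (S, c)) := by
  have card_eq : Multiset.card {c} + (S : Multiset SignType).card = 3 := by
    rw [S.card_coe, Multiset.card_singleton]
  obtain ⟨L, U, disjoint, ortho, inertiaOn_line, inertiaOn_plane⟩ :=
    exists_disjoint_inertiaOn_stdForm_eq (card_eq.trans_le hp) (card_eq.trans_le hq)
  obtain ⟨F, rfl, rfl⟩ := exists_line_eq_plane_eq
    (by rw [← card_inertiaOn isSymm_stdForm, inertiaOn_line, Multiset.card_singleton])
    (by rw [← card_inertiaOn isSymm_stdForm, inertiaOn_plane, S.card_coe]) ortho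
  exact ⟨F, disjoint, inertiaOn_line, inertiaOn_plane⟩

theorem exists_hasLabel_inr (hp : 2 ≤ p) (hq : 2 ≤ q) (a : SignType) :
    ∃ F : FlagPQ p q, F.HasLabel (.inr a) := by
  have card_eq : ({0} : Multiset SignType).card + ({a} : Multiset SignType).card = 2 := rfl
  obtain ⟨L, C, disjoint, ortho, inertiaOn_line, inertiaOn_compl⟩ :=
    exists_disjoint_inertiaOn_stdForm_eq (card_eq.trans_le hp) (card_eq.trans_le hq)
  have isotropic : L ≤ (stdForm p q).orthogonal L :=
    (forall_mem_inertiaOn_eq_zero_iff isSymm_stdForm).1 (by simp [inertiaOn_line])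
  have inertiaOn_plane : inertiaOn (stdForm p q) (L ⊔ C) = {0, a} := by
    rw [inertiaOn_sup isSymm_stdForm disjoint ortho, inertiaOn_line, inertiaOn_compl]
    rfl
  obtain ⟨F, hline, hplane⟩ := exists_line_eq_plane_eq
    (by rw [← card_inertiaOn isSymm_stdForm, inertiaOn_line, Multiset.card_singleton])
    (by rw [← card_inertiaOn isSymm_stdForm, inertiaOn_plane, Multiset.card_pair])
    (le_orthogonal_sup isotropic ortho)
  exact ⟨F, hline ▸ hplane ▸ le_sup_left, hplane ▸ inertiaOn_plane⟩

end FlagPQ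

/-- If `p, q ≥ 3`, the action of `O(p,q)` on the flag manifold `F_{1, p+q-2}`
has exactly 21 orbits. -/
theorem orbit_count_of_three_le (p q : ℕ) (hp : 3 ≤ p) (hq : 3 ≤ q) :
    Nat.card (Quot (orbitRel p q)) = 21 := by
  rw [card_quot_eq_card_of_label (P := FlagPQ.HasLabel), card_flagLabel]
  · intro F
    obtain ⟨b, hb⟩ := F.exists_hasLabel (by lia)
    exact ⟨b, hb, fun _ hb' ↦ hb'.unique hb⟩
  · rintro (⟨S, c⟩ | a)
    · exact FlagPQ.exists_hasLabel_inl hp hq S c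
    · exact FlagPQ.exists_hasLabel_inr (by lia) (by lia) a
  · intro F G
    refine ⟨fun h ↦ ?_, fun ⟨_, hF, hG⟩ ↦ hF.orbitRel hG⟩
    obtain ⟨b, hG⟩ := G.exists_hasLabel (by lia)
    exact ⟨b, hG.of_orbitRel h, hG⟩
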